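/- Let r > 0 and s > 0 with s ≠ r. Then the improper integral r·lim_{R→∞} ∫₀^R J₁(rρ)·J₀(sρ) dρ exists and equals 1 if s < r and equals 0 if s > r, where J₀(x) := (1/π)·∫₀^π cos(x·cos φ) dφ and J₁(x) := (x/π)·∫₀^π sin²(φ)·cos(x·cos φ) dφ. -/

import Mathlib

/-!
Put `z(φ) = r - s e^{iφ}`, which satisfies `|z(φ)|² = r² + s² - 2 r s cos φ > 0` since `s ≠ r`.
By rotation invariance of the circle, the circle average over `θ` of `cos θ sin (ρ ⟨z, e^{iθ}⟩)` is
`(Re z / |z|) J₁ (ρ |z|)`. Averaging over `φ` as well and exchanging the two averages yields the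
product `J₁ (r ρ) J₀ (s ρ)` (`addition`). Integrating in `ρ`, with `∫₀^X J₁ = 1 - J₀ X`, gives

`r ∫₀^R J₁ (r ρ) J₀ (s ρ) dρ = (1 / 2π) ∫₀^{2π} (1 - J₀ (R |z(φ)|)) Re (r / z(φ)) dφ`

(`integral_eq`). As `R → ∞`, `J₀ (R |z|) → 0` by the Riemann–Lebesgue lemma (`tendsto_J0`), and
dominated convergence leaves the average of `Re (r / z(φ))`, which the mean value property of
holomorphic functions evaluates to `1` if `s < r` and `0` if `s > r` (`integral_kernel`).
-/

open Filter

/-- The Bessel function of order 0. -/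
noncomputable def J0 (x : ℝ) : ℝ :=
  (1 / Real.pi) * ∫ φ in (0 : ℝ)..Real.pi, Real.cos (x * Real.cos φ)

/-- The Bessel function of order 1. -/
noncomputable def J1 (x : ℝ) : ℝ :=
  (x / Real.pi) * ∫ φ in (0 : ℝ)..Real.pi, (Real.sin φ) ^ 2 * Real.cos (x * Real.cos φ)

open Real Set MeasureTheory

namespace BesselDisk

lemma integral_swap (f : ℝ → ℝ → ℝ) (hf : Continuous (Function.uncurry f)) (a b c d : ℝ) :
    ∫ x in a..b, ∫ y in c..d, f x y = ∫ y in c..d, ∫ x in a..b, f x y := by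
  apply MeasureTheory.intervalIntegral_intervalIntegral_swap
  have h : IntegrableOn (Function.uncurry f) (uIcc a b ×ˢ uIcc c d) (volume.prod volume) :=
    hf.continuousOn.integrableOn_compact (isCompact_uIcc.prod isCompact_uIcc)
  exact h.mono_set (prod_mono uIoc_subset_uIcc uIoc_subset_uIcc)

lemma integral_double {f : ℝ → ℝ} (hf : Continuous f) (hper : ∀ θ, f (θ + π) = f θ) :
    ∫ θ in (0 : ℝ)..2 * π, f θ = 2 * ∫ θ in (0 : ℝ)..π, f θ := by
  have h1 : ∫ θ in π..2 * π, f θ = ∫ θ in (0 : ℝ)..π, f θ := by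
    have := intervalIntegral.integral_comp_add_right f π (a := 0) (b := π)
    simp only [hper, zero_add] at this
    rw [this, two_mul]
  rw [← intervalIntegral.integral_add_adjacent_intervals (hf.intervalIntegrable 0 π)
    (hf.intervalIntegrable π (2 * π)), h1, two_mul]

lemma integral_shift {f : ℝ → ℝ} (hper : Function.Periodic f (2 * π)) (α : ℝ) :
    ∫ θ in (0 : ℝ)..2 * π, f (θ + α) = ∫ θ in (0 : ℝ)..2 * π, f θ := by
  rw [intervalIntegral.integral_comp_add_right]
  have := hper.intervalIntegral_add_eq α 0
  simpa [add_comm] using this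

lemma integral_reflect_odd {f : ℝ → ℝ} (hodd : ∀ θ, f (2 * π - θ) = -f θ) :
    ∫ θ in (0 : ℝ)..2 * π, f θ = 0 := by
  have := intervalIntegral.integral_comp_sub_left f (2 * π) (a := 0) (b := 2 * π)
  simp only [hodd, sub_self, sub_zero, intervalIntegral.integral_neg] at this
  linarith

lemma J0_half (x : ℝ) : π * J0 x = ∫ φ in (0 : ℝ)..π, cos (x * cos φ) := by
  unfold J0
  field_simp

/-- The integral `∫ cos φ sin (x cos φ)` for `J₁` (that is, `J₁ = -J₀'`), obtained by integrating
the derivative of `sin φ * sin (x cos φ)`, which vanishes at both endpoints. -/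
lemma J1_half (x : ℝ) : π * J1 x = ∫ φ in (0 : ℝ)..π, cos φ * sin (x * cos φ) := by
  have hd : ∀ φ ∈ uIcc 0 π, HasDerivAt (fun φ => sin φ * sin (x * cos φ))
      (cos φ * sin (x * cos φ) - x * (sin φ ^ 2 * cos (x * cos φ))) φ := fun φ _ => by
    refine ((hasDerivAt_sin φ).mul (((hasDerivAt_cos φ).const_mul x).sin)).congr_deriv ?_
    ring
  have h := intervalIntegral.integral_eq_sub_of_hasDerivAt hd
    (Continuous.intervalIntegrable (by fun_prop) _ _)
  rw [intervalIntegral.integral_sub (Continuous.intervalIntegrable (by fun_prop) _ _)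
    (Continuous.intervalIntegrable (by fun_prop) _ _), intervalIntegral.integral_const_mul] at h
  simp only [sin_pi, sin_zero, zero_mul, sub_self] at h
  unfold J1
  field_simp
  linarith

lemma J0_full (x : ℝ) : ∫ φ in (0 : ℝ)..2 * π, cos (x * cos φ) = 2 * π * J0 x := by
  rw [integral_double (by fun_prop) (by simp [cos_add_pi]), mul_assoc, J0_half]

lemma J1_full (x : ℝ) : ∫ φ in (0 : ℝ)..2 * π, cos φ * sin (x * cos φ) = 2 * π * J1 x := by
  rw [integral_double (by fun_prop) (by simp [cos_add_pi]), mul_assoc, J1_half]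

lemma continuous_J0 : Continuous J0 := by
  unfold J0
  exact continuous_const.mul (intervalIntegral.continuous_parametric_intervalIntegral_of_continuous'
    (by fun_prop) _ _)

lemma continuous_J1 : Continuous J1 := by
  unfold J1
  exact (continuous_id.div_const _).mul
    (intervalIntegral.continuous_parametric_intervalIntegral_of_continuous' (by fun_prop) _ _)

lemma abs_J0_le (x : ℝ) : |J0 x| ≤ 1 := by
  have h := intervalIntegral.norm_integral_le_of_norm_le_const (a := 0) (b := π) (C := 1)
    (f := fun φ => cos (x * cos φ)) (fun φ _ => by simpa using abs_cos_le_one _)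
  rw [← J0_half, norm_mul, norm_eq_abs, norm_eq_abs, sub_zero, abs_of_pos pi_pos] at h
  nlinarith [pi_pos]

/-- `J₀' = -J₁` and `J₀ 0 = 1`, in integrated form; the proof is Fubini, so that no differentiation
under the integral sign is needed. -/
lemma integral_J1 (X : ℝ) : ∫ t in (0 : ℝ)..X, J1 t = 1 - J0 X := by
  have hinner (φ : ℝ) : ∫ t in (0 : ℝ)..X, cos φ * sin (t * cos φ) = 1 - cos (X * cos φ) := by
    have hd : ∀ t ∈ uIcc 0 X, HasDerivAt (fun t => -cos (t * cos φ))
        (cos φ * sin (t * cos φ)) t := fun t _ => by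
      refine ((((hasDerivAt_id t).mul_const (cos φ)).cos).neg).congr_deriv ?_
      simp only [id]
      ring
    rw [intervalIntegral.integral_eq_sub_of_hasDerivAt hd
      (Continuous.intervalIntegrable (by fun_prop) _ _)]
    simp
    ring
  have h : π * ∫ t in (0 : ℝ)..X, J1 t = π * (1 - J0 X) := by
    rw [← intervalIntegral.integral_const_mul]
    simp only [J1_half]
    rw [integral_swap _ (by fun_prop)]
    simp only [hinner]
    rw [intervalIntegral.integral_sub (by simp) (Continuous.intervalIntegrable (by fun_prop) _ _),
      ← J0_half]
    simp
    ring
  exact mul_left_cancel₀ pi_ne_zero h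

lemma integral_J1_mul {w : ℝ} (hw : w ≠ 0) (R : ℝ) :
    ∫ ρ in (0 : ℝ)..R, J1 (ρ * w) = (1 - J0 (R * w)) / w := by
  rw [intervalIntegral.integral_comp_mul_right _ hw, zero_mul, integral_J1]
  simp only [smul_eq_mul]
  field_simp

/-- Under `u = cos φ`, `J₀` is the real part of a Fourier integral of `1 / √(1 - u²)` on `(-1, 1)`,
so the Riemann–Lebesgue lemma applies. -/
lemma tendsto_J0 : Tendsto J0 atTop (nhds 0) := by
  set g : ℝ → ℂ := indicator (cos '' Ioo 0 π) (fun u => ((√(1 - u ^ 2))⁻¹ : ℝ)) with hg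
  have hm : MeasurableSet (cos '' Ioo 0 π) :=
    measurableSet_Ioo.image_of_continuousOn_injOn continuous_cos.continuousOn
      (injOn_cos.mono Ioo_subset_Icc_self)
  -- The change of variables and the Riemann–Lebesgue lemma hold in Mathlib without an integrability
  -- hypothesis, so integrability of `g` at its endpoint singularities never has to be checked.
  have key (w : ℝ) : ∫ v : ℝ, Real.fourierChar (-(v * w)) • g v
      = ∫ φ in Ioo 0 π, Complex.exp (((-(2 * π * w) * cos φ : ℝ) : ℂ) * Complex.I) := by
    have h1 : (fun v : ℝ => Real.fourierChar (-(v * w)) • g v) =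
        indicator (cos '' Ioo 0 π) (fun v => Real.fourierChar (-(v * w)) •
          (((√(1 - v ^ 2))⁻¹ : ℝ) : ℂ)) := by
      ext v
      by_cases hv : v ∈ cos '' Ioo 0 π
      · simp only [hg, indicator_of_mem hv]
      · simp only [hg, indicator_of_notMem hv, smul_zero]
    rw [h1, integral_indicator hm, integral_image_eq_integral_abs_deriv_smul measurableSet_Ioo
      (fun x _ => (hasDerivAt_cos x).hasDerivWithinAt) (injOn_cos.mono Ioo_subset_Icc_self)]
    refine setIntegral_congr_fun measurableSet_Ioo fun φ hφ => ?_
    have hs : 0 < sin φ := sin_pos_of_mem_Ioo hφ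
    have h2 : √(1 - cos φ ^ 2) = sin φ := by
      rw [← sin_sq, sqrt_sq hs.le]
    simp only [h2, abs_neg, abs_of_pos hs, Circle.smul_def, Real.fourierChar_apply, smul_eq_mul,
      Complex.real_smul, Complex.ofReal_inv]
    have : (sin φ : ℂ) ≠ 0 := by exact_mod_cast hs.ne'
    rw [mul_left_comm, mul_inv_cancel₀ this, mul_one]
    congr 2
    push_cast
    ring
  have hRL := (Real.tendsto_integral_exp_smul_cocompact g).mono_left atTop_le_cocompact
  have h3 : Tendsto (fun x : ℝ => x / (2 * π)) atTop atTop :=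
    tendsto_id.atTop_div_const (by positivity)
  have h4 := (Complex.continuous_re.tendsto _).comp (hRL.comp h3)
  have h5 := h4.const_mul (1 / π)
  simp only [Complex.zero_re, mul_zero] at h5
  refine h5.congr fun x => ?_
  simp only [Function.comp_apply, key]
  unfold J0
  rw [intervalIntegral.integral_of_le pi_pos.le, integral_Ioc_eq_integral_Ioo]
  congr 1
  have hint : Integrable (fun φ => Complex.exp (((-(2 * π * (x / (2 * π))) * cos φ : ℝ) : ℂ)
      * Complex.I)) (volume.restrict (Ioo 0 π)) :=
    (Continuous.integrableOn_Icc (by fun_prop)).mono_set Ioo_subset_Icc_self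
  refine (integral_re (𝕜 := ℂ) hint).symm.trans ?_
  refine integral_congr_ae (Eventually.of_forall fun φ => ?_)
  have : 2 * π * (x / (2 * π)) = x := by field_simp
  simp only [this, RCLike.re_eq_complex_re, Complex.exp_ofReal_mul_I_re]
  rw [neg_mul, cos_neg]

/-- Rotation: averaging `cos θ * sin (ρ ⟨z, e^{iθ}⟩)` over the circle gives `cos (arg z) * J₁ (ρ |z|)`,
here for `z = w e^{iα}`. -/
lemma integral_rotate (ρ w α : ℝ) :
    ∫ θ in (0 : ℝ)..2 * π, cos θ * sin (ρ * (w * cos α * cos θ + w * sin α * sin θ))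
      = 2 * π * (cos α * J1 (ρ * w)) := by
  have hper : Function.Periodic
      (fun θ => cos θ * sin (ρ * (w * cos α * cos θ + w * sin α * sin θ))) (2 * π) :=
    fun θ => by simp
  rw [← integral_shift hper α]
  have he (θ : ℝ) : cos (θ + α) * sin (ρ * (w * cos α * cos (θ + α) + w * sin α * sin (θ + α)))
      = cos α * (cos θ * sin (ρ * w * cos θ)) - sin α * (sin θ * sin (ρ * w * cos θ)) := by
    have h1 : w * cos α * cos (θ + α) + w * sin α * sin (θ + α) = w * cos θ := by
      rw [cos_add, sin_add]
      linear_combination (w * cos θ) * sin_sq_add_cos_sq α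
    rw [h1, cos_add, mul_assoc ρ]
    ring
  simp only [he]
  rw [intervalIntegral.integral_sub (Continuous.intervalIntegrable (by fun_prop) _ _)
    (Continuous.intervalIntegrable (by fun_prop) _ _), intervalIntegral.integral_const_mul,
    intervalIntegral.integral_const_mul, J1_full,
    integral_reflect_odd (f := fun θ => sin θ * sin (ρ * w * cos θ))
      (fun θ => by simp [sin_two_pi_sub, cos_two_pi_sub])]
  ring

/-- `integral_rotate` for a nonzero vector `(a, b)` in Cartesian coordinates. -/
lemma integral_vector {a b : ℝ} (h : 0 < a ^ 2 + b ^ 2) (ρ : ℝ) :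
    ∫ θ in (0 : ℝ)..2 * π, cos θ * sin (ρ * (a * cos θ + b * sin θ))
      = 2 * π * (a / √(a ^ 2 + b ^ 2) * J1 (ρ * √(a ^ 2 + b ^ 2))) := by
  have hn : ‖(⟨a, b⟩ : ℂ)‖ = √(a ^ 2 + b ^ 2) := by
    rw [Complex.norm_eq_sqrt_sq_add_sq]
  have h1 := Complex.norm_mul_cos_arg ⟨a, b⟩
  have h2 := Complex.norm_mul_sin_arg ⟨a, b⟩
  rw [hn] at h1 h2
  have h3 := integral_rotate ρ (√(a ^ 2 + b ^ 2)) (Complex.arg ⟨a, b⟩)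
  simp only [h1, h2] at h3
  rw [h3, eq_div_of_mul_eq (sqrt_pos.2 h).ne' ((mul_comm _ _).trans h1)]

lemma dist_sq (r s φ : ℝ) :
    (r - s * cos φ) ^ 2 + (-(s * sin φ)) ^ 2 = r ^ 2 + s ^ 2 - 2 * r * s * cos φ := by
  linear_combination s ^ 2 * sin_sq_add_cos_sq φ

lemma dist_sq_pos {r s : ℝ} (hr : 0 < r) (hs : 0 < s) (hsr : s ≠ r) (φ : ℝ) :
    0 < r ^ 2 + s ^ 2 - 2 * r * s * cos φ := by
  have h1 : 0 < (s - r) ^ 2 := by have := sub_ne_zero.2 hsr; positivity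
  nlinarith [cos_le_one φ, mul_pos hr hs]

/-- The radial derivative of Gegenbauer's addition theorem: the average of the first component of
`J₁ (ρ |z|) z / |z|` over the circle `z = r - s e^{iφ}` is `J₁ (r ρ) J₀ (s ρ)`. -/
lemma addition {r s : ℝ} (hr : 0 < r) (hs : 0 < s) (hsr : s ≠ r) (ρ : ℝ) :
    ∫ φ in (0 : ℝ)..2 * π, (r - s * cos φ) / √(r ^ 2 + s ^ 2 - 2 * r * s * cos φ)
        * J1 (ρ * √(r ^ 2 + s ^ 2 - 2 * r * s * cos φ))
      = 2 * π * (J1 (r * ρ) * J0 (s * ρ)) := by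
  have hv (φ : ℝ) : (r - s * cos φ) / √(r ^ 2 + s ^ 2 - 2 * r * s * cos φ)
        * J1 (ρ * √(r ^ 2 + s ^ 2 - 2 * r * s * cos φ)) =
      (2 * π)⁻¹ * ∫ θ in (0 : ℝ)..2 * π,
        cos θ * sin (r * ρ * cos θ - s * ρ * cos (φ + -θ)) := by
    have h := integral_vector (a := r - s * cos φ) (b := -(s * sin φ))
      (by rw [dist_sq]; exact dist_sq_pos hr hs hsr φ) ρ
    rw [dist_sq] at h
    have h2 : 2 * π ≠ 0 := by positivity
    rw [eq_inv_mul_iff_mul_eq₀ h2, ← h]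
    refine intervalIntegral.integral_congr fun θ _ => ?_
    simp only [cos_add, cos_neg, sin_neg]
    ring_nf
  have hφ (θ : ℝ) : ∫ φ in (0 : ℝ)..2 * π,
      cos θ * sin (r * ρ * cos θ - s * ρ * cos (φ + -θ)) =
      2 * π * J0 (s * ρ) * (cos θ * sin (r * ρ * cos θ)) := by
    rw [integral_shift (f := fun φ => cos θ * sin (r * ρ * cos θ - s * ρ * cos φ))
      (fun φ => by simp)]
    simp only [sin_sub, mul_sub]
    rw [intervalIntegral.integral_sub (Continuous.intervalIntegrable (by fun_prop) _ _)
      (Continuous.intervalIntegrable (by fun_prop) _ _)]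
    simp only [← mul_assoc, intervalIntegral.integral_const_mul]
    -- The half-turn `φ ↦ φ + π` changes the sign of the integrand.
    have hodd : ∫ φ in (0 : ℝ)..2 * π, sin (s * ρ * cos φ) = 0 := by
      have hp : Function.Periodic (fun φ => sin (s * ρ * cos φ)) (2 * π) := fun φ => by simp
      have := integral_shift hp π
      simp only [cos_add_pi, mul_neg, sin_neg, intervalIntegral.integral_neg] at this
      linarith
    rw [J0_full, hodd]
    ring
  simp only [hv]
  rw [intervalIntegral.integral_const_mul, integral_swap _ (by fun_prop)]
  simp only [hφ]
  rw [intervalIntegral.integral_const_mul, J1_full]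
  field_simp

/-- `Re (r / z)` at `z = r - s e^{iφ}`: the flux per unit angle, through the circle of radius `r`
about the origin, of the planar field of a point charge at distance `s` from the origin, normalised
to have total flux `2π`. -/
noncomputable def kernel (r s φ : ℝ) : ℝ :=
  r * (r - s * cos φ) / (r ^ 2 + s ^ 2 - 2 * r * s * cos φ)

lemma continuous_kernel {r s : ℝ} (hr : 0 < r) (hs : 0 < s) (hsr : s ≠ r) :
    Continuous (kernel r s) := by
  unfold kernel
  exact Continuous.div (by fun_prop) (by fun_prop) fun φ => (dist_sq_pos hr hs hsr φ).ne'

/-- The mean value property for `z / (z - s)` on the circle `|z| = r`, whose pole `s` lies inside. -/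
lemma integral_kernel_of_lt {r s : ℝ} (hs : 0 < s) (h : s < r) :
    ∫ φ in (0 : ℝ)..2 * π, kernel r s φ = 2 * π := by
  have hr : 0 < r := hs.trans h
  have hne (φ : ℝ) : circleMap 0 r φ - s ≠ 0 := fun h0 => by
    have h1 := congrArg norm (sub_eq_zero.1 h0)
    rw [norm_circleMap_zero, Complex.norm_real, norm_eq_abs, abs_of_pos hr, abs_of_pos hs] at h1
    exact h.ne' h1
  have hA := DiffContOnCl.circleAverage_smul_div (f := fun _ => (1 : ℂ)) (c := 0) (R := r)
    (w := (s : ℂ)) diffContOnCl_const (by simpa [abs_of_pos hs, abs_of_pos hr] using h)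
  rw [circleAverage_def, inv_smul_eq_iff₀ (by positivity)] at hA
  have hint : IntervalIntegrable (fun φ : ℝ => circleMap 0 r φ / (circleMap 0 r φ - s))
      volume 0 (2 * π) :=
    (Continuous.div (by fun_prop) (by fun_prop) hne).intervalIntegrable _ _
  have hre := intervalIntegral.intervalIntegral_re hint
  simp only [sub_zero, smul_eq_mul, mul_one] at hA
  rw [hA] at hre
  have hk (φ : ℝ) : kernel r s φ = RCLike.re (circleMap 0 r φ / (circleMap 0 r φ - s)) := by
    have hD := (dist_sq_pos hr hs h.ne φ).ne'
    have hN : Complex.normSq (circleMap 0 r φ - s) = r ^ 2 + s ^ 2 - 2 * r * s * cos φ := by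
      simp [Complex.normSq_apply, circleMap, Complex.exp_ofReal_mul_I_re,
        Complex.exp_ofReal_mul_I_im]
      linear_combination r ^ 2 * sin_sq_add_cos_sq φ
    rw [RCLike.re_eq_complex_re, Complex.div_re, hN, kernel]
    simp [circleMap, Complex.exp_ofReal_mul_I_re, Complex.exp_ofReal_mul_I_im]
    rw [← add_div]
    congr 1
    linear_combination -r ^ 2 * sin_sq_add_cos_sq φ
  simp only [hk, hre]
  simp

/-- Gauss's law in the plane. The case `r < s` reduces to the other one because the kernels with `r`
and `s` exchanged add up to `1`. -/
lemma integral_kernel {r s : ℝ} (hr : 0 < r) (hs : 0 < s) (hsr : s ≠ r) :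
    ∫ φ in (0 : ℝ)..2 * π, kernel r s φ = if s < r then 2 * π else 0 := by
  split_ifs with h
  · exact integral_kernel_of_lt hs h
  · have hlt : r < s := lt_of_le_of_ne (not_lt.1 h) hsr.symm
    have hk (φ : ℝ) : kernel r s φ = 1 - kernel s r φ := by
      have hD := (dist_sq_pos hr hs hsr φ).ne'
      have hD' := (dist_sq_pos hs hr hsr.symm φ).ne'
      unfold kernel
      rw [eq_sub_iff_add_eq, show s ^ 2 + r ^ 2 - 2 * s * r * cos φ =
        r ^ 2 + s ^ 2 - 2 * r * s * cos φ by ring, ← add_div, div_eq_one_iff_eq hD]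
      ring
    simp only [hk]
    rw [intervalIntegral.integral_sub (by simp)
      ((continuous_kernel hs hr hsr.symm).intervalIntegrable _ _), integral_kernel_of_lt hr hlt]
    simp

lemma integral_eq {r s : ℝ} (hr : 0 < r) (hs : 0 < s) (hsr : s ≠ r) (R : ℝ) :
    r * ∫ ρ in (0 : ℝ)..R, J1 (r * ρ) * J0 (s * ρ) = (2 * π)⁻¹ * ∫ φ in (0 : ℝ)..2 * π,
      (1 - J0 (R * √(r ^ 2 + s ^ 2 - 2 * r * s * cos φ))) * kernel r s φ := by
  have h2 : 2 * π ≠ 0 := by positivity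
  have hD := dist_sq_pos hr hs hsr
  have hc : Continuous fun φ => (r - s * cos φ) / √(r ^ 2 + s ^ 2 - 2 * r * s * cos φ) :=
    Continuous.div (by fun_prop) (by fun_prop) fun φ => (sqrt_pos.2 (hD φ)).ne'
  have hsw : ∫ ρ in (0 : ℝ)..R, 2 * π * (J1 (r * ρ) * J0 (s * ρ)) =
      ∫ φ in (0 : ℝ)..2 * π, (r - s * cos φ) / √(r ^ 2 + s ^ 2 - 2 * r * s * cos φ) *
        ((1 - J0 (R * √(r ^ 2 + s ^ 2 - 2 * r * s * cos φ))) /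
          √(r ^ 2 + s ^ 2 - 2 * r * s * cos φ)) := by
    simp only [← addition hr hs hsr]
    rw [integral_swap _ ((hc.comp continuous_snd).mul (continuous_J1.comp (by fun_prop)))]
    refine intervalIntegral.integral_congr fun φ _ => ?_
    rw [intervalIntegral.integral_const_mul, integral_J1_mul (sqrt_pos.2 (hD φ)).ne']
  rw [intervalIntegral.integral_const_mul] at hsw
  rw [eq_inv_mul_iff_mul_eq₀ h2, mul_left_comm, hsw, ← intervalIntegral.integral_const_mul]
  refine intervalIntegral.integral_congr fun φ _ => ?_
  have hq := sq_sqrt (hD φ).le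
  have hq0 := (sqrt_pos.2 (hD φ)).ne'
  simp only [kernel]
  rw [← hq, sqrt_sq (sqrt_nonneg _)]
  field_simp

end BesselDisk

open BesselDisk in
/-- for `r, s > 0`, `s ≠ r`, the improper integral
`r·lim_{R→∞} ∫₀^R J₁(rρ) J₀(sρ) dρ` exists and equals `1` if `s < r` and `0` if `s > r`. -/
theorem stmt11 (r s : ℝ) (hr : 0 < r) (hs : 0 < s) (hsr : s ≠ r) :
    Tendsto (fun R => r * ∫ ρ in (0 : ℝ)..R, J1 (r * ρ) * J0 (s * ρ)) atTop
      (nhds (if s < r then (1 : ℝ) else 0)) := by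
  simp only [integral_eq hr hs hsr]
  have hlim : (if s < r then (1 : ℝ) else 0) =
      (2 * π)⁻¹ * ∫ φ in (0 : ℝ)..2 * π, kernel r s φ := by
    rw [integral_kernel hr hs hsr]
    split_ifs
    · field_simp
    · simp
  rw [hlim]
  refine Tendsto.const_mul _ ?_
  have hk := continuous_kernel hr hs hsr
  refine intervalIntegral.tendsto_integral_filter_of_dominated_convergence
    (fun φ => 2 * |kernel r s φ|) (Eventually.of_forall fun R => ?_)
    (Eventually.of_forall fun R => Eventually.of_forall fun φ _ => ?_)
    (Continuous.intervalIntegrable (by fun_prop) _ _) (Eventually.of_forall fun φ _ => ?_)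
  · exact ((continuous_const.sub (continuous_J0.comp (by fun_prop))).mul hk).aestronglyMeasurable
  · rw [norm_mul, norm_eq_abs, norm_eq_abs]
    gcongr
    have := abs_le.1 (abs_J0_le (R * √(r ^ 2 + s ^ 2 - 2 * r * s * cos φ)))
    rw [abs_le]
    constructor <;> linarith
  · have h := tendsto_J0.comp
      (tendsto_id.atTop_mul_const (sqrt_pos.2 (dist_sq_pos hr hs hsr φ)))
    simpa using (h.const_sub 1).mul_const (kernel r s φ)
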